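/- arXiv:1506.08382 — 2 statements merged into one kernel-verified Lean document; each statement's English description precedes it below -/
import Mathlib

section
/- For every positive real number m and every positive real number c, f(m,c)^m = f(1,c). -/
/-- `f m c = ∑_{k=0}^∞ (km+1)^{k-1} c^k e^{-c(km+1)/m} / (m^k k!)`, where the factor
`(km+1)^{k-1}` for `k = 0` is interpreted as `1` (here via `ℕ`-subtraction in the exponent,
which gives `(0·m+1)^0 = 1`). -/
noncomputable def f (m c : ℝ) : ℝ :=
  ∑' k : ℕ, ((k : ℝ) * m + 1) ^ (k - 1) * c ^ k *
    Real.exp (-c * ((k : ℝ) * m + 1) / m) / (m ^ k * (Nat.factorial k : ℝ))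

/-!
The polynomials `Pₙ(x) = x (x + n) ^ (n - 1) / n!` satisfy `d/dx Pₙ₊₁(x) = Pₙ(x + 1)`, hence Abel's
binomial identity `Pₙ(x + y) = ∑ Pᵢ(x) Pₙ₋ᵢ(y)`. Their generating function `H(z, x) = ∑ Pₙ(x) zⁿ`,
which converges for `‖z‖ ≤ e⁻¹` by Stirling's bound, therefore turns sums in `x` into products.
For real `z` it is also measurable in `x`, so `H(z, t x) = H(z, x) ^ t`. As
`f m c = e ^ (-c / m) H(c e⁻ᶜ, 1 / m)`, raising to the power `m` replaces `1 / m` by `1`.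
-/

open Finset Polynomial
open scoped Nat

section AbelPolynomial

variable (K : Type*) [Field K]

/-- The Abel polynomial `X (X + n) ^ (n - 1) / n!`, that is `Aₙ(X; -1) / n!` in the classical
notation `Aₙ(X; a) = X (X - a n) ^ (n - 1)`. The case `n = 0` is separate because the exponent
is `-1` there. -/
noncomputable def abelPoly : ℕ → K[X]
  | 0 => 1
  | n + 1 => C (((n + 1)! : K)⁻¹) * (X * (X + C (n + 1 : K)) ^ n)

@[simp]
lemma abelPoly_zero : abelPoly K 0 = 1 := rfl

variable {K}

lemma eval_abelPoly_succ (n : ℕ) (x : K) :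
    (abelPoly K (n + 1)).eval x = x * (x + (n + 1)) ^ n / (n + 1)! := by
  simp [abelPoly, div_eq_inv_mul]

@[simp]
lemma eval_zero_abelPoly_succ (n : ℕ) : (abelPoly K (n + 1)).eval 0 = 0 := by
  simp [eval_abelPoly_succ]

lemma eq_of_derivative_eq_of_eval_zero_eq {R : Type*} [Ring R] [IsAddTorsionFree R] {p q : R[X]}
    (hderiv : derivative p = derivative q) (hzero : p.eval 0 = q.eval 0) : p = q := by
  have hconst := eq_C_of_derivative_eq_zero (p := p - q) (by rw [derivative_sub, hderiv, sub_self])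
  rwa [coeff_zero_eq_eval_zero, eval_sub, hzero, sub_self, C_0, sub_eq_zero] at hconst

variable [CharZero K]

lemma derivative_abelPoly_succ (n : ℕ) :
    derivative (abelPoly K (n + 1)) = (abelPoly K n).comp (X + 1) := by
  cases n with
  | zero => simp [abelPoly]
  | succ n =>
    have hfactorial : ((n + 1 + 1)! : K)⁻¹ * (n + 1 + 1) = ((n + 1)! : K)⁻¹ := by
      have : (n + 1 + 1 : K) ≠ 0 := by exact_mod_cast (n + 1).succ_ne_zero
      rw [Nat.factorial_succ]
      push_cast
      field_simp
    simp only [abelPoly, ← hfactorial, derivative_mul, derivative_C, derivative_X,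
      derivative_X_add_C_pow, mul_comp, C_comp, X_comp, pow_comp, add_comp]
    simp only [C_add, C_mul, C_1, Nat.cast_add, Nat.cast_one, Nat.add_sub_cancel]
    ring

lemma abelPoly_comp_X_add_C (n : ℕ) (y : K) :
    (abelPoly K n).comp (X + C y) =
      ∑ p ∈ antidiagonal n, abelPoly K p.1 * C ((abelPoly K p.2).eval y) := by
  induction n with
  | zero => simp
  | succ n ih =>
    apply eq_of_derivative_eq_of_eval_zero_eq
    · calc derivative ((abelPoly K (n + 1)).comp (X + C y))
          = ((abelPoly K n).comp (X + C y)).comp (X + 1) := by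
            simp [derivative_comp, derivative_abelPoly_succ, comp_assoc, add_right_comm]
        _ = derivative (∑ p ∈ antidiagonal (n + 1),
              abelPoly K p.1 * C ((abelPoly K p.2).eval y)) := by
            simp [ih, Nat.sum_antidiagonal_succ, derivative_abelPoly_succ]
    · simp [Nat.sum_antidiagonal_succ, eval_finsetSum]

theorem eval_add_abelPoly (n : ℕ) (x y : K) :
    (abelPoly K n).eval (x + y) =
      ∑ p ∈ antidiagonal n, (abelPoly K p.1).eval x * (abelPoly K p.2).eval y := by
  simpa [eval_finsetSum] using congr_arg (eval x) (abelPoly_comp_X_add_C n y)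

end AbelPolynomial

section Estimates

lemma add_pow_le_pow_mul_exp {a x : ℝ} {n : ℕ} (ha : 0 < a) (hn : n ≤ a) (hx : 0 ≤ x) :
    (x + a) ^ n ≤ a ^ n * Real.exp x :=
  calc (x + a) ^ n = a ^ n * (x / a + 1) ^ n := by rw [← mul_pow]; field_simp
    _ ≤ a ^ n * Real.exp (x / a) ^ n := by gcongr; exact Real.add_one_le_exp _
    _ = a ^ n * Real.exp (n / a * x) := by rw [← Real.exp_nat_mul]; ring_nf
    _ ≤ a ^ n * Real.exp x := by
      gcongr
      exact mul_le_of_le_one_left hx ((div_le_one ha).2 hn)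

lemma sqrt_mul_pow_le_factorial_mul_exp (n : ℕ) : √n * (n : ℝ) ^ n ≤ n ! * Real.exp n := by
  have hsqrt : √(n : ℝ) ≤ √(2 * Real.pi * n) :=
    Real.sqrt_le_sqrt <| le_mul_of_one_le_left n.cast_nonneg (by linarith [Real.pi_gt_three])
  calc √n * (n : ℝ) ^ n = √n * (n / Real.exp 1) ^ n * Real.exp n := by
        rw [div_pow, ← Real.exp_nat_mul, mul_one]; field_simp
    _ ≤ √(2 * Real.pi * n) * (n / Real.exp 1) ^ n * Real.exp n := by gcongr
    _ ≤ n ! * Real.exp n := by gcongr; exact Stirling.le_factorial_stirling n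

variable {𝕜 : Type*} [RCLike 𝕜]

lemma norm_eval_abelPoly_succ_le (n : ℕ) (x : 𝕜) :
    ‖(abelPoly 𝕜 (n + 1)).eval x‖ ≤
      ‖x‖ * Real.exp ‖x‖ * (Real.exp (n + 1) / (n + 1 : ℝ) ^ (3 / 2 : ℝ)) := by
  set N : ℝ := n + 1 with hN
  have hN0 : 0 < N := by positivity
  have hpow : N ^ (3 / 2 : ℝ) = N * √N := by
    rw [Real.sqrt_eq_rpow, ← Real.rpow_one_add' hN0.le] <;> norm_num
  have hnorm : ‖x + (n + 1)‖ ≤ ‖x‖ + N := by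
    have hnat : ‖(n + 1 : 𝕜)‖ = n + 1 := by exact_mod_cast RCLike.norm_natCast (K := 𝕜) (n + 1)
    exact (norm_add_le _ _).trans_eq (by rw [hnat])
  have hstirling : √N * N ^ (n + 1) ≤ (n + 1)! * Real.exp N := by
    simpa [hN] using sqrt_mul_pow_le_factorial_mul_exp (n + 1)
  calc ‖(abelPoly 𝕜 (n + 1)).eval x‖ = ‖x‖ * ‖x + (n + 1)‖ ^ n / (n + 1)! := by
        simp [eval_abelPoly_succ]
    _ ≤ ‖x‖ * (‖x‖ + N) ^ n / (n + 1)! := by gcongr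
    _ ≤ ‖x‖ * (N ^ n * Real.exp ‖x‖) / (n + 1)! := by
        gcongr
        exact add_pow_le_pow_mul_exp hN0 (by simp [hN]) (norm_nonneg x)
    _ = ‖x‖ * Real.exp ‖x‖ * (N ^ n / (n + 1)!) := by ring
    _ ≤ ‖x‖ * Real.exp ‖x‖ * (Real.exp N / N ^ (3 / 2 : ℝ)) := by
        gcongr ?_ * ?_
        rw [hpow, div_le_div_iff₀ (by positivity) (by positivity)]
        linear_combination hstirling

lemma summable_norm_eval_abelPoly_mul_pow {z : 𝕜} (hz : ‖z‖ ≤ Real.exp (-1)) (x : 𝕜) :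
    Summable fun n ↦ ‖(abelPoly 𝕜 n).eval x * z ^ n‖ := by
  have hsum : Summable fun n : ℕ ↦ ‖x‖ * Real.exp ‖x‖ * (1 / ((n + 1 : ℕ) : ℝ) ^ (3 / 2 : ℝ)) :=
    ((summable_nat_add_iff 1).2 (Real.summable_one_div_nat_rpow.2 (by norm_num))).mul_left _
  refine (summable_nat_add_iff 1).1 (hsum.of_nonneg_of_le (fun _ ↦ norm_nonneg _) fun n ↦ ?_)
  calc ‖(abelPoly 𝕜 (n + 1)).eval x * z ^ (n + 1)‖
      = ‖(abelPoly 𝕜 (n + 1)).eval x‖ * ‖z‖ ^ (n + 1) := by rw [norm_mul, norm_pow]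
    _ ≤ ‖x‖ * Real.exp ‖x‖ * (Real.exp (n + 1) / (n + 1 : ℝ) ^ (3 / 2 : ℝ)) *
          Real.exp (-1) ^ (n + 1) := by
        gcongr
        exact norm_eval_abelPoly_succ_le n x
    _ = ‖x‖ * Real.exp ‖x‖ * (1 / ((n + 1 : ℕ) : ℝ) ^ (3 / 2 : ℝ)) := by
        rw [← Real.exp_nat_mul, mul_neg_one, Real.exp_neg]
        push_cast
        field_simp

end Estimates

section AbelSeries

variable {𝕜 : Type*} [RCLike 𝕜]

/-- The generating function `∑ Pₙ(x) zⁿ` of the Abel polynomials `abelPoly`. The sum is the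
junk value `0` where the series diverges; it converges for `‖z‖ ≤ e⁻¹`. -/
noncomputable def abelSeries (z x : 𝕜) : 𝕜 :=
  ∑' n, (abelPoly 𝕜 n).eval x * z ^ n

lemma measurable_abelSeries (z : 𝕜) : Measurable (abelSeries z) :=
  Measurable.tsum fun n ↦ (abelPoly 𝕜 n).continuous.measurable.mul_const _

lemma abelSeries_zero (z : 𝕜) : abelSeries z 0 = 1 := by
  rw [abelSeries, tsum_eq_single 0]
  · simp
  · rintro (_ | n) hn
    · contradiction
    · simp

lemma abelSeries_add {z : 𝕜} (hz : ‖z‖ ≤ Real.exp (-1)) (x y : 𝕜) :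
    abelSeries z (x + y) = abelSeries z x * abelSeries z y := by
  rw [abelSeries, abelSeries, abelSeries, tsum_mul_tsum_eq_tsum_sum_antidiagonal_of_summable_norm
    (summable_norm_eval_abelPoly_mul_pow hz x) (summable_norm_eval_abelPoly_mul_pow hz y)]
  congr! 2 with n
  rw [eval_add_abelPoly, sum_mul]
  refine sum_congr rfl fun p hp ↦ ?_
  rw [← mem_antidiagonal.1 hp, pow_add, mul_mul_mul_comm]

/-- The generating function `abelSeries z` as an additive character of `𝕜`, for `z` in its closed
disc of convergence. -/
noncomputable def abelChar {z : 𝕜} (hz : ‖z‖ ≤ Real.exp (-1)) : AddChar 𝕜 𝕜 where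
  toFun := abelSeries z
  map_zero_eq_one' := abelSeries_zero z
  map_add_eq_mul' := abelSeries_add hz

end AbelSeries

section RealCharacter

lemma addChar_pos (ψ : AddChar ℝ ℝ) (x : ℝ) : 0 < ψ x := by
  rw [← add_halves x, ψ.map_add_eq_mul]
  exact mul_self_pos.2 (ψ.val_isUnit _).ne_zero

lemma addChar_mul_eq_rpow {ψ : AddChar ℝ ℝ} (hψ : Measurable ψ) (t x : ℝ) :
    ψ (t * x) = ψ x ^ t := by
  let L : ℝ →+ ℝ := AddMonoidHom.mk' (fun x ↦ Real.log (ψ x)) fun x y ↦ by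
    rw [ψ.map_add_eq_mul, Real.log_mul (addChar_pos ψ x).ne' (addChar_pos ψ y).ne']
  have hL : Continuous L :=
    MeasureTheory.Measure.AddMonoidHom.continuous_of_measurable L (Real.measurable_log.comp hψ)
  have hlog : Real.log (ψ (t * x)) = t * Real.log (ψ x) := map_real_smul L hL t x
  rw [Real.rpow_def_of_pos (addChar_pos ψ x), mul_comm (Real.log _), ← hlog,
    Real.exp_log (addChar_pos ψ _)]

end RealCharacter

lemma f_eq_exp_mul_abelSeries {m : ℝ} (hm : m ≠ 0) (c : ℝ) :
    f m c = Real.exp (-c / m) * abelSeries (c * Real.exp (-c)) (1 / m) := by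
  rw [f, abelSeries, ← tsum_mul_left]
  congr! 2 with k
  have hexp : Real.exp (-c * (k * m + 1) / m) = Real.exp (-c / m) * Real.exp (-c) ^ k := by
    rw [← Real.exp_nat_mul, ← Real.exp_add]
    congr 1
    field_simp
    ring
  cases k with
  | zero => simp
  | succ n =>
    have hbase : 1 / m + (n + 1) = ((n + 1 : ℕ) * m + 1) / m := by
      push_cast
      field_simp
      ring
    rw [hexp, eval_abelPoly_succ, hbase, div_pow, Nat.add_sub_cancel]
    field_simp
    ring

/-- Since `c e⁻ᶜ ≤ e⁻¹` for every real `c`, the lower bound puts `c e⁻ᶜ` in the closed disc where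
`abelSeries` converges. -/
theorem f_rpow_real_general {m c : ℝ} (hm : m ≠ 0) (hc : -Real.exp (-1) ≤ c * Real.exp (-c)) :
    f m c ^ m = f 1 c := by
  have hz : ‖c * Real.exp (-c)‖ ≤ Real.exp (-1) := abs_le.2 ⟨hc, Real.mul_exp_neg_le_exp_neg_one c⟩
  let ψ : AddChar ℝ ℝ := abelChar hz
  have hf : ∀ {t : ℝ}, t ≠ 0 → f t c = Real.exp (-c / t) * ψ (1 / t) :=
    fun ht ↦ f_eq_exp_mul_abelSeries ht c
  calc f m c ^ m = Real.exp (-c / m) ^ m * ψ (1 / m) ^ m := by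
        rw [hf hm, Real.mul_rpow (Real.exp_pos _).le (addChar_pos ψ _).le]
    _ = Real.exp (-c / m * m) * ψ (m * (1 / m)) := by
        rw [Real.exp_mul, addChar_mul_eq_rpow (measurable_abelSeries _)]
    _ = Real.exp (-c / 1) * ψ (1 / 1) := by
        rw [div_mul_cancel₀ _ hm, mul_one_div_cancel hm, div_one, div_one]
    _ = f 1 c := (hf one_ne_zero).symm

theorem f_rpow_real (m : ℝ) (hm : 0 < m) (c : ℝ) (hc : 0 < c) :
    f m c ^ m = f 1 c :=
  f_rpow_real_general hm.ne' <|
    (neg_nonpos.2 (Real.exp_pos _).le).trans (mul_pos hc (Real.exp_pos _)).le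
end

section
/- For any positive integers m and n, the number of rooted forests on the vertex set {1,…,n} whose edges are colored with m colors equals (mn+1)^{n-1}. Concretely: the number of pairs (F, χ) where F is a forest (acyclic graph) on {1,…,n} together with a choice of one root vertex in each connected component, and χ assigns to each edge of F one of m colors, equals (mn+1)^{n-1}. -/
/-- A rooted `m`-forest on the vertex set `Fin n`: an acyclic simple graph together with a
choice of one root vertex in each connected component, and an assignment of one of `m`
colors to each edge. -/
structure RootedMForest (n m : ℕ) where
  /-- the underlying simple graph -/
  graph : SimpleGraph (Fin n)
  /-- the graph is a forest, i.e. acyclic -/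
  acyclic : graph.IsAcyclic
  /-- a choice of root vertex for each connected component -/
  root : graph.ConnectedComponent → Fin n
  /-- the chosen root belongs to its component -/
  root_mem : ∀ C : graph.ConnectedComponent, graph.connectedComponentMk (root C) = C
  /-- each edge is assigned one of `m` colors -/
  edgeColor : graph.edgeSet → Fin m

/-!
A rooted forest on `V` is the same as a map `p : V → Option V`, sending each vertex to its parent
and each root to `none`, whose iteration always terminates; its edges correspond to the non-roots.
A coloring turns `p` into a map `f : V → T` with `T = Option (V × Fin m)`, of which only the
composite with `π : T → Option V` must terminate.

For an arbitrary `π : T → Option V`, the maps `f : V → T` such that `π ∘ f` terminates are counted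
by induction on `V`: fix the value `t` of `f` at one vertex `w`, where `π t ≠ w`, delete `w`, and
let all elements of `T` over `w` lie over `π t` instead. This changes the number of elements over
`none` only if `π t = none`, and summing over `t` shows that the proportion of such `f` among all
maps is `|π⁻¹(none)| / |T|`, whatever the size of `V`. Here this is `1 / (m * n + 1)`.
-/

section

/-- `p : V → Option V` is the parent function of a rooted forest, with `none` marking the roots:
passing from a vertex to its parent terminates. -/
def IsParentMap {V : Type*} (p : V → Option V) : Prop :=
  WellFounded fun u v => p v = some u

variable {U V W T M : Type*}

namespace IsParentMap

lemma comp_equiv {p : W → Option W} (hp : IsParentMap p) (e : V ≃ W) :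
    IsParentMap fun v => (p (e v)).map e.symm := by
  refine Subrelation.wf (fun {u v} h => ?_) (InvImage.wf e hp)
  obtain ⟨w, hw, rfl⟩ := Option.map_eq_some_iff.mp h
  simpa [InvImage] using hw

end IsParentMap

lemma isParentMap_map_equiv_iff (e : V ≃ W) {p : V → Option W} :
    IsParentMap (fun v => (p v).map e.symm) ↔ IsParentMap (fun w => p (e.symm w)) := by
  refine ⟨fun h => ?_, fun h => ?_⟩
  · simpa [Function.comp_def] using h.comp_equiv e.symm
  · simpa using h.comp_equiv e

/-- Where an arrow of a parent map on `Option W` points after the vertex `none`, whose own arrow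
points to `x`, has been deleted: arrows into `none` are continued along `x`. The value on
`some none` when `x = some none` is irrelevant. -/
def contractNone (x : Option (Option W)) : Option (Option W) → Option W
  | some none => x.join
  | y => y.join

lemma isParentMap_option_iff {p : Option W → Option (Option W)} :
    IsParentMap p ↔ p none ≠ some none ∧
      IsParentMap fun w => contractNone (p none) (p (some w)) := by
  refine ⟨fun hp => ⟨hp.irrefl.irrefl none, ?_⟩, fun ⟨hnone, hp⟩ => ?_⟩
  · refine Subrelation.wf (fun {u v} h => ?_) (InvImage.wf some hp.transGen)
    rcases hv : p (some v) with _ | _ | w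
    · simp [contractNone, hv] at h
    · have hu : p none = some (some u) := by
        simpa [contractNone, hv, Option.join_eq_some_iff] using h
      exact .tail (.single hu) hv
    · obtain rfl : w = u := by simpa [contractNone, hv] using h
      exact .single hv
  · have acc_none (h : ∀ u, p none = some (some u) → Acc (fun u v => p v = some u) (some u)) :
        Acc (fun u v => p v = some u) none :=
      ⟨_, fun y hy => y.rec (fun hy => absurd hy hnone) (fun u hy => h u hy) hy⟩
    have acc_some (w : W) : Acc (fun u v => p v = some u) (some w) := by
      induction w using hp.induction with | _ w ih
      refine ⟨_, fun y hy => ?_⟩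
      rcases y with _ | u
      · exact acc_none fun u hu => ih u (by simp [contractNone, hy, hu])
      · exact ih u (by simp [contractNone, hy])
    exact ⟨Option.rec (acc_none fun u _ => acc_some u) acc_some⟩

section Count

open Finset

lemma sum_card_contractNone_eq_none [Fintype T] [DecidableEq W] (π : T → Option (Option W)) :
    ∑ t with π t ≠ some none, #{x | contractNone (π t) (π x) = none} =
      #{t | π t = none} * Fintype.card T := by
  have hcard (t : T) (ht : π t ≠ some none) : #{x | contractNone (π t) (π x) = none} =
      #{x | π x = none} + if π t = none then #{x | π x = some none} else 0 := by
    have hjoin : (π t).join = none ↔ π t = none := by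
      rcases h : π t with _ | _ | w <;> simp_all
    have hiff (x : T) : contractNone (π t) (π x) = none ↔
        π x = none ∨ π t = none ∧ π x = some none := by
      rcases π x with _ | _ | w <;> simp [contractNone, hjoin]
    classical
    rw [filter_congr fun x _ => hiff x, filter_or,
      card_union_of_disjoint (disjoint_filter.mpr (by simp +contextual))]
    split_ifs with h <;> simp [h]
  calc ∑ t with π t ≠ some none, #{x | contractNone (π t) (π x) = none}
    _ = ∑ t with π t ≠ some none,
          (#{x | π x = none} + if π t = none then #{x | π x = some none} else 0) :=
      sum_congr rfl fun t ht => hcard t (mem_filter.mp ht).2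
    _ = #{t | π t ≠ some none} * #{x | π x = none} +
          #{t | π t = none} * #{x | π x = some none} := by
      rw [sum_add_distrib, sum_const, ← sum_filter, sum_const, filter_filter, smul_eq_mul,
        smul_eq_mul]
      congr! 4 with t
      simp +contextual
    _ = #{t | π t = none} * (#{t | π t = some none} + #{t | π t ≠ some none}) := by ring
    _ = #{t | π t = none} * Fintype.card T := by
      rw [card_filter_add_card_filter_not, card_univ]

/-- Splitting off the value at the vertex `none` of a map `f` for which `π ∘ f` is a parent map, and
contracting that vertex. -/
def parentMapOptionEquiv (π : T → Option (Option W)) :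
    {f : Option W → T // IsParentMap (π ∘ f)} ≃
      Σ t : {t // π t ≠ some none}, {g : W → T // IsParentMap (contractNone (π t) ∘ π ∘ g)} where
  toFun f := ⟨⟨f.1 none, (isParentMap_option_iff.mp f.2).1⟩, f.1 ∘ some,
    (isParentMap_option_iff.mp f.2).2⟩
  invFun x := ⟨fun v => v.elim x.1 x.2.1, isParentMap_option_iff.mpr ⟨x.1.2, x.2.2⟩⟩
  left_inv f := Subtype.ext (funext fun v => by cases v <;> rfl)
  right_inv x := rfl

theorem card_mul_card_isParentMap [Finite V] [Fintype T] (π : T → Option V) :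
    Fintype.card T * Nat.card {f : V → T // IsParentMap (π ∘ f)} =
      #{t | π t = none} * Fintype.card T ^ Nat.card V := by
  classical
  induction V using Finite.induction_empty_option with
  | of_equiv e ih =>
    rw [← Nat.card_congr e, ← Nat.card_congr ((e.arrowCongr (.refl T)).subtypeEquiv fun f =>
      isParentMap_map_equiv_iff e (p := π ∘ f))]
    simpa [Function.comp_def] using ih fun t => (π t).map e.symm
  | h_empty =>
    have hvac (f : PEmpty → T) : IsParentMap (π ∘ f) := ⟨PEmpty.rec⟩
    simp [hvac, Subsingleton.elim _ (none : Option PEmpty)]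
  | @h_option W _ ih =>
    calc Fintype.card T * Nat.card {f : Option W → T // IsParentMap (π ∘ f)}
      _ = ∑ t : {t // π t ≠ some none}, Fintype.card T *
            Nat.card {g : W → T // IsParentMap (contractNone (π t) ∘ π ∘ g)} := by
        rw [Nat.card_congr (parentMapOptionEquiv π), Nat.card_sigma, mul_sum]
      _ = ∑ t : {t // π t ≠ some none},
            #{x | contractNone (π t) (π x) = none} * Fintype.card T ^ Nat.card W :=
        sum_congr rfl fun t _ => ih (contractNone (π t) ∘ π)
      _ = (∑ t with π t ≠ some none, #{x | contractNone (π t) (π x) = none}) *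
            Fintype.card T ^ Nat.card W := by
        rw [← sum_mul]
        congr 1
        exact (sum_subtype {t | π t ≠ some none} (by simp)
          fun t => #{x | contractNone (π t) (π x) = none}).symm
      _ = #{t | π t = none} * Fintype.card T ^ Nat.card (Option W) := by
        rw [sum_card_contractNone_eq_none, Finite.card_option, pow_succ', mul_assoc]

end Count

lemma IsParentMap.not_reflTransGen_of_eq_some {p : V → Option V} (hp : IsParentMap p) {u v : V}
    (h : p v = some u) : ¬ Relation.ReflTransGen (fun x y => p x = some y) u v := fun huv =>
  hp.transGen.irrefl.irrefl v (Relation.transGen_swap.mp (.head' h huv))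

lemma IsParentMap.ne_some_of_eq_some {p : V → Option V} (hp : IsParentMap p) {u v : V}
    (h : p v = some u) : p u ≠ some v := fun h' =>
  hp.not_reflTransGen_of_eq_some h (.single h')

/-- The graph joining every vertex to its parent under `p`. -/
def parentGraph (p : V → Option V) : SimpleGraph V :=
  SimpleGraph.fromRel fun v u => p v = some u

lemma reflTransGen_of_reachable_parentGraph {p : V → Option V} {r v : V} (hr : p r = none)
    (h : (parentGraph p).Reachable v r) : Relation.ReflTransGen (fun x y => p x = some y) v r := by
  obtain ⟨w⟩ := h
  induction w with
  | nil => exact .refl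
  | cons hadj _ ih =>
    obtain hvu | huv := hadj.2
    · exact .head hvu (ih hr)
    · obtain rfl | ⟨y, huy, hyr⟩ := (ih hr).cases_head
      · simp [hr] at huv
      · obtain rfl : _ = y := Option.some_inj.mp (huv.symm.trans huy)
        exact hyr

namespace IsParentMap

variable {p : V → Option V}

lemma parentGraph_adj_iff (hp : IsParentMap p) {u v : V} :
    (parentGraph p).Adj u v ↔ p u = some v ∨ p v = some u := by
  refine and_iff_right_of_imp ?_
  rintro h rfl
  exact hp.irrefl.irrefl _ (by simpa using h)

lemma isBridge_parentGraph (hp : IsParentMap p) {u v : V} (h : p v = some u) :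
    (parentGraph p).IsBridge s(v, u) := by
  classical
  have hle : (parentGraph p).deleteEdges {s(v, u)} ≤ parentGraph (Function.update p v none) := by
    intro x y hxy
    simp only [SimpleGraph.deleteEdges_adj, parentGraph, SimpleGraph.fromRel_adj] at hxy ⊢
    grind
  rw [SimpleGraph.isBridge_iff]
  intro hreach
  have hdesc := reflTransGen_of_reachable_parentGraph (Function.update_self v none p)
    (hreach.symm.mono hle)
  have hstep (x y : V) : Function.update p v none x = some y → p x = some y := by grind
  exact hp.not_reflTransGen_of_eq_some h (hdesc.lift id hstep)

lemma isAcyclic_parentGraph (hp : IsParentMap p) : (parentGraph p).IsAcyclic := by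
  rw [SimpleGraph.isAcyclic_iff_forall_adj_isBridge]
  intro u v huv
  obtain h | h := hp.parentGraph_adj_iff.mp huv
  · exact hp.isBridge_parentGraph h
  · exact Sym2.eq_swap ▸ hp.isBridge_parentGraph h

lemma exists_reachable_root (hp : IsParentMap p) (v : V) :
    ∃ r, (parentGraph p).Reachable r v ∧ p r = none := by
  induction v using hp.induction with | _ v ih
  rcases h : p v with _ | u
  · exact ⟨v, .rfl, h⟩
  · obtain ⟨r, hru, hr⟩ := ih u h
    exact ⟨r, hru.trans (hp.parentGraph_adj_iff.mpr (.inr h)).reachable, hr⟩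

lemma existsUnique_root (hp : IsParentMap p) (C : (parentGraph p).ConnectedComponent) :
    ∃! r, (parentGraph p).connectedComponentMk r = C ∧ p r = none := by
  induction C using SimpleGraph.ConnectedComponent.ind with | _ v
  obtain ⟨r, hrv, hr⟩ := hp.exists_reachable_root v
  refine ⟨r, ⟨SimpleGraph.ConnectedComponent.sound hrv, hr⟩, fun s ⟨hsv, hs⟩ => ?_⟩
  have hreach : (parentGraph p).Reachable s r :=
    (SimpleGraph.ConnectedComponent.exact hsv).trans hrv.symm
  obtain h | ⟨y, hy, _⟩ := (reflTransGen_of_reachable_parentGraph hr hreach).cases_head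
  · exact h
  · simp [hs] at hy

/-- The edges of a forest correspond to its non-roots, `v` to the edge from `v` to its parent. -/
noncomputable def edgeEquiv (hp : IsParentMap p) :
    {v // (p v).isSome} ≃ (parentGraph p).edgeSet :=
  .ofBijective (fun v => ⟨s(v.1, (p v).get v.2), hp.parentGraph_adj_iff.mpr (.inl (by simp))⟩) <| by
    refine ⟨fun ⟨v, hv⟩ ⟨w, hw⟩ h => ?_, fun ⟨e, he⟩ => ?_⟩
    · obtain ⟨u, hu⟩ := Option.isSome_iff_exists.mp hv
      obtain ⟨x, hx⟩ := Option.isSome_iff_exists.mp hw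
      simp only [Subtype.mk.injEq, Sym2.eq_iff, hu, hx, Option.get_some] at h ⊢
      obtain ⟨hvw, -⟩ | ⟨rfl, rfl⟩ := h
      · exact hvw
      · exact absurd hx (hp.ne_some_of_eq_some hu)
    · induction e with | _ u v
      obtain h | h := hp.parentGraph_adj_iff.mp he
      · exact ⟨⟨u, by simp [h]⟩, by simp [h]⟩
      · exact ⟨⟨v, by simp [h]⟩, by simp [h, Sym2.eq_swap]⟩

end IsParentMap

lemma existsUnique_adj_dist_eq_add_one {G : SimpleGraph V} (hG : G.IsAcyclic) {r v : V}
    (hreach : G.Reachable r v) (hne : r ≠ v) : ∃! u, G.Adj v u ∧ G.dist r v = G.dist r u + 1 := by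
  obtain ⟨P, hP, hPlen⟩ := hreach.exists_path_of_dist
  have hnil : ¬ P.Nil := SimpleGraph.Walk.not_nil_of_ne hne
  have hadj := (P.adj_penultimate hnil).symm
  refine ⟨P.penultimate, ⟨hadj, ?_⟩, fun u ⟨hu, _⟩ => ?_⟩
  · refine (hG.dist_eq_dist_add_one_of_adj_of_reachable r hadj hreach).resolve_right ?_
    have hdrop : G.dist r P.penultimate ≤ P.length :=
      (SimpleGraph.dist_le P.dropLast).trans (by simp)
    omega
  · obtain ⟨Q, hQ, hQlen⟩ := (hreach.trans hu.reachable).exists_path_of_dist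
    have hvQ : v ∉ Q.support := fun hvQ => by
      have := congrArg SimpleGraph.Walk.length (hG.path_concat hP hQ hu hvQ)
      rw [SimpleGraph.Walk.length_concat] at this
      omega
    exact hG.eq_penultimate_of_adj_end hP hu
      (hG.mem_support_of_ne_mem_support_of_adj_of_isPath hP hQ hu hvQ)

lemma IsParentMap.eq_of_parentGraph_eq {p q : V → Option V} (hp : IsParentMap p)
    (hq : IsParentMap q) (hgraph : parentGraph p = parentGraph q)
    (hroot : ∀ v, p v = none ↔ q v = none) : p = q := by
  funext v
  induction v using hp.induction with | _ v ih
  rcases h : p v with _ | u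
  · exact ((hroot v).mp h).symm
  · have hadj : (parentGraph q).Adj v u := hgraph ▸ hp.parentGraph_adj_iff.mpr (.inl h)
    obtain hqv | hqu := hq.parentGraph_adj_iff.mp hadj
    · exact hqv.symm
    · exact absurd ((ih u h).trans hqu) (hp.ne_some_of_eq_some h)

/-- A forest on an arbitrary vertex type with a chosen root in each component: the uncolored
counterpart of `RootedMForest`. -/
structure RootedForest (V : Type*) where
  graph : SimpleGraph V
  acyclic : graph.IsAcyclic
  root : graph.ConnectedComponent → V
  root_mem : ∀ C : graph.ConnectedComponent, graph.connectedComponentMk (root C) = C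

namespace RootedForest

/-- The root of the component of `v`. -/
def rootOf (F : RootedForest V) (v : V) : V := F.root (F.graph.connectedComponentMk v)

lemma reachable_rootOf (F : RootedForest V) (v : V) : F.graph.Reachable (F.rootOf v) v :=
  SimpleGraph.ConnectedComponent.exact (F.root_mem _)

lemma rootOf_eq_of_adj (F : RootedForest V) {u v : V} (h : F.graph.Adj u v) :
    F.rootOf u = F.rootOf v :=
  congrArg F.root (SimpleGraph.ConnectedComponent.sound h.reachable)

lemma ext_rootOf {F F' : RootedForest V} (hgraph : F.graph = F'.graph)
    (hroot : ∀ v, F.rootOf v = v → F'.rootOf v = v) : F = F' := by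
  obtain ⟨G, hG, ρ, hρ⟩ := F
  obtain ⟨G', hG', ρ', hρ'⟩ := F'
  obtain rfl : G = G' := hgraph
  obtain rfl : ρ = ρ' := funext fun C => by
    simpa [rootOf, hρ] using (hroot (ρ C) (by simp [rootOf, hρ])).symm
  rfl

/-- The distance from `v` to the root of its component. -/
noncomputable def depth (F : RootedForest V) (v : V) : ℕ := F.graph.dist (F.rootOf v) v

/-- `u` is the parent of `v`: the neighbor of `v` that is one step closer to the root. -/
def IsParent (F : RootedForest V) (v u : V) : Prop :=
  F.graph.Adj v u ∧ F.depth v = F.depth u + 1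

lemma isParent_or_isParent_of_adj (F : RootedForest V) {u v : V} (h : F.graph.Adj u v) :
    F.IsParent u v ∨ F.IsParent v u := by
  have := F.acyclic.dist_eq_dist_add_one_of_adj_of_reachable _ h (F.reachable_rootOf u)
  simpa [IsParent, h, h.symm, depth, ← F.rootOf_eq_of_adj h] using this

lemma existsUnique_isParent (F : RootedForest V) {v : V} (hv : F.rootOf v ≠ v) :
    ∃! u, F.IsParent v u := by
  have h := existsUnique_adj_dist_eq_add_one F.acyclic (F.reachable_rootOf v) hv
  refine (existsUnique_congr fun u => and_congr_right fun hu => ?_).mp h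
  rw [depth, depth, F.rootOf_eq_of_adj hu]

lemma not_isParent_of_rootOf_eq (F : RootedForest V) {v : V} (hv : F.rootOf v = v) (u : V) :
    ¬ F.IsParent v u := by
  rintro ⟨-, h⟩
  simp [depth, hv] at h

open Classical in
/-- The parent map of a rooted forest. -/
noncomputable def parent (F : RootedForest V) (v : V) : Option V :=
  if h : F.rootOf v = v then none else some (F.existsUnique_isParent h).choose

lemma parent_eq_none_iff (F : RootedForest V) {v : V} : F.parent v = none ↔ F.rootOf v = v := by
  simp [parent]

lemma parent_eq_some_iff (F : RootedForest V) {v u : V} :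
    F.parent v = some u ↔ F.IsParent v u := by
  by_cases h : F.rootOf v = v
  · simp [F.parent_eq_none_iff.mpr h, F.not_isParent_of_rootOf_eq h]
  · obtain ⟨hu, huniq⟩ := (F.existsUnique_isParent h).choose_spec
    simp only [parent, h, dite_false, Option.some_inj]
    exact ⟨fun h => h ▸ hu, fun h => (huniq u h).symm⟩

lemma isParentMap_parent (F : RootedForest V) : IsParentMap F.parent := by
  refine Subrelation.wf (fun {u v} h => ?_) (measure F.depth).wf
  have hdepth := (F.parent_eq_some_iff.mp h).2
  exact (Nat.lt_succ_self _).trans_eq hdepth.symm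

lemma parentGraph_parent (F : RootedForest V) : parentGraph F.parent = F.graph := by
  ext u v
  rw [F.isParentMap_parent.parentGraph_adj_iff, F.parent_eq_some_iff, F.parent_eq_some_iff]
  exact ⟨fun h => h.elim (·.1) (·.1.symm), F.isParent_or_isParent_of_adj⟩

/-- The rooted forest with a given parent map. -/
noncomputable def ofParentMap (p : V → Option V) (hp : IsParentMap p) : RootedForest V where
  graph := parentGraph p
  acyclic := hp.isAcyclic_parentGraph
  root C := (hp.existsUnique_root C).choose
  root_mem C := (hp.existsUnique_root C).choose_spec.1.1

lemma rootOf_ofParentMap_eq_self_iff {p : V → Option V} (hp : IsParentMap p) {v : V} :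
    (ofParentMap p hp).rootOf v = v ↔ p v = none := by
  obtain ⟨⟨-, hroot⟩, huniq⟩ :=
    (hp.existsUnique_root ((parentGraph p).connectedComponentMk v)).choose_spec
  exact ⟨fun h => by rw [← h]; exact hroot, fun h => (huniq v ⟨rfl, h⟩).symm⟩

/-- Rooted forests correspond to parent maps. -/
noncomputable def equivParentMap : RootedForest V ≃ {p : V → Option V // IsParentMap p} where
  toFun F := ⟨F.parent, F.isParentMap_parent⟩
  invFun p := ofParentMap p.1 p.2
  left_inv F := ext_rootOf F.parentGraph_parent fun v h => by
    rwa [rootOf_ofParentMap_eq_self_iff, parent_eq_none_iff] at h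
  right_inv p := Subtype.ext <|
    (isParentMap_parent _).eq_of_parentGraph_eq p.2 (parentGraph_parent _) fun v => by
      rw [parent_eq_none_iff, rootOf_ofParentMap_eq_self_iff]

end RootedForest

/-- The map sending `v` to the pair of `p v` and the color `c v` wherever `p v` is defined. -/
def withColors (p : V → Option U) (c : {v // (p v).isSome} → M) (v : V) : Option (U × M) :=
  (p v).pmap (fun u h => (u, c ⟨v, h⟩)) fun _ => Option.isSome_of_mem

lemma map_fst_comp_withColors (p : V → Option U) (c : {v // (p v).isSome} → M) :
    Option.map Prod.fst ∘ withColors p c = p := by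
  funext v
  simp [withColors, Option.map_pmap]

lemma withColors_of_eq_some {p : V → Option U} (c : {v // (p v).isSome} → M) {v : V} {u : U}
    (h : p v = some u) : withColors p c v = some (u, c ⟨v, by simp [h]⟩) := by
  simp [withColors, h]

lemma withColors_injective (p : V → Option U) :
    Function.Injective (withColors (M := M) p) := by
  intro c d h
  funext ⟨v, hv⟩
  obtain ⟨u, hu⟩ := Option.isSome_iff_exists.mp hv
  simpa [withColors_of_eq_some _ hu] using congrFun h v

lemma bijective_withColors : Function.Bijective
    fun x : Σ p : V → Option U, ({v // (p v).isSome} → M) => withColors x.1 x.2 := by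
  refine ⟨fun ⟨p, c⟩ ⟨q, d⟩ h => ?_, fun f => ?_⟩
  · obtain rfl : p = q := by
      rw [← map_fst_comp_withColors p c, ← map_fst_comp_withColors q d]
      exact congrArg _ h
    obtain rfl : c = d := withColors_injective p h
    rfl
  · refine ⟨⟨Option.map Prod.fst ∘ f, fun v => ((f v).get (by simpa using v.2)).2⟩, ?_⟩
    funext v
    rcases h : f v <;> simp [withColors, h]

/-- A partial map into `U × M` is a partial map into `U` together with a color in `M` for each
element of its domain. -/
noncomputable def withColorsEquiv :
    (Σ p : V → Option U, ({v // (p v).isSome} → M)) ≃ (V → Option (U × M)) :=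
  .ofBijective _ bijective_withColors

lemma withColorsEquiv_apply (x : Σ p : V → Option U, ({v // (p v).isSome} → M)) :
    withColorsEquiv x = withColors x.1 x.2 :=
  rfl

end

namespace RootedMForest

variable {n m : ℕ}

/-- A colored rooted forest is a rooted forest together with a coloring of its edges. -/
def equivSigma :
    RootedMForest n m ≃ Σ F : RootedForest (Fin n), (F.graph.edgeSet → Fin m) where
  toFun F := ⟨⟨F.graph, F.acyclic, F.root, F.root_mem⟩, F.edgeColor⟩
  invFun x := ⟨x.1.graph, x.1.acyclic, x.1.root, x.1.root_mem, x.2⟩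

/-- Colored rooted forests correspond to parent maps in which every non-root carries the color of
the edge to its parent. -/
noncomputable def equivColoredParentMap : RootedMForest n m ≃
    {f : Fin n → Option (Fin n × Fin m) // IsParentMap (Option.map Prod.fst ∘ f)} :=
  calc RootedMForest n m
    _ ≃ Σ F : RootedForest (Fin n), (F.graph.edgeSet → Fin m) := equivSigma
    _ ≃ Σ p : {p : Fin n → Option (Fin n) // IsParentMap p},
          ((parentGraph p.1).edgeSet → Fin m) :=
      (Equiv.sigmaCongrLeft RootedForest.equivParentMap.symm).symm
    _ ≃ Σ p : {p : Fin n → Option (Fin n) // IsParentMap p},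
          ({v // (p.1 v).isSome} → Fin m) :=
      Equiv.sigmaCongrRight fun p => p.2.edgeEquiv.symm.arrowCongr (.refl _)
    _ ≃ {x : Σ p : Fin n → Option (Fin n), ({v // (p v).isSome} → Fin m) // IsParentMap x.1} :=
      (Equiv.subtypeSigmaEquiv (fun p : Fin n → Option (Fin n) => {v // (p v).isSome} → Fin m)
        IsParentMap).symm
    _ ≃ {f : Fin n → Option (Fin n × Fin m) // IsParentMap (Option.map Prod.fst ∘ f)} :=
      withColorsEquiv.subtypeEquiv fun x => by
        rw [withColorsEquiv_apply, map_fst_comp_withColors]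

end RootedMForest

theorem card_rootedMForest (m n : ℕ) (hm : 0 < m) (hn : 0 < n) :
    Nat.card (RootedMForest n m) = (m * n + 1) ^ (n - 1) := by
  have hcount := card_mul_card_isParentMap (Option.map (Prod.fst : Fin n × Fin m → Fin n))
  rw [← Nat.card_congr RootedMForest.equivColoredParentMap] at hcount
  have hroot : (Finset.univ.filter fun t : Option (Fin n × Fin m) =>
      t.map Prod.fst = none).card = 1 :=
    Finset.card_eq_one.mpr ⟨none, by ext; simp⟩
  have hcard : Fintype.card (Option (Fin n × Fin m)) = m * n + 1 := by
    simp [mul_comm]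
  rw [hroot, hcard, one_mul, Nat.card_fin, ← mul_pow_sub_one hn.ne'] at hcount
  exact Nat.eq_of_mul_eq_mul_left (Nat.succ_pos _) hcount
end
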